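/- arXiv:2107.12126 — 5 statements merged into one kernel-verified Lean document; each statement's English description precedes it below -/
import Mathlib

section
/- Let (G, σ) be a signed simple graph with a vertex w of degree 2. If the signed graph obtained by deleting w from (G, σ) has circular chromatic number strictly less than 4, then (G, σ) also has circular chromatic number strictly less than 4. -/
/-!
Colors are viewed as points of a circle of circumference `r`, so that an edge forbids the
difference of its end colors from lying within distance `1` of `0` (positive edge) or of `r / 2`
(negative edge), modulo `r` (`hasCircularColoring_iff`).

Given an `r₀`-coloring of the graph without `w`, with `r₀ < 4`, dilate it by `c = 6 / (r₀ + 2) > 1`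
to a circle of circumference `r = c * r₀ < 4`. Every constraint then holds with the slack
`c - 1 = (4 - r) / 2`. The two neighbors of `w` forbid two open arcs of length `2` on a circle of
circumference `r = 4 - 2 (c - 1)`; these cover the circle only if their centers are within `c - 1`
of being antipodal, so moving one neighbor by at most `c - 1` leaves a free color for `w`
(`exists_free_color`), and the slack absorbs this move.
-/

open scoped ENNReal

/-- A circular `r`-coloring of the signed graph `(G, σ)` (`σ e = true` meaning the edge `e`
is positive): a map `f : V → [0, r)` such that positive edges `uv` satisfy
`1 ≤ |f u - f v| ≤ r - 1` and negative edges satisfy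
`|f u - f v| ≤ r/2 - 1` or `|f u - f v| ≥ r/2 + 1`. -/
def IsCircularColoring {V : Type*} (G : SimpleGraph V) (σ : Sym2 V → Bool) (r : ℝ)
    (f : V → ℝ) : Prop :=
  (∀ v, 0 ≤ f v ∧ f v < r) ∧
  ∀ u v, G.Adj u v →
    (if σ s(u, v) then 1 ≤ |f u - f v| ∧ |f u - f v| ≤ r - 1
     else |f u - f v| ≤ r / 2 - 1 ∨ r / 2 + 1 ≤ |f u - f v|)

def HasCircularColoring {V : Type*} (G : SimpleGraph V) (σ : Sym2 V → Bool) (r : ℝ) : Prop :=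
  ∃ f : V → ℝ, IsCircularColoring G σ r f

/-- The circular chromatic number of a signed graph, as an element of `ℝ≥0∞`:
the infimum of all real numbers `r ≥ 2` admitting a circular `r`-coloring
(`⊤` if there is none). -/
noncomputable def circChrom {V : Type*} (G : SimpleGraph V) (σ : Sym2 V → Bool) : ℝ≥0∞ :=
  sInf (ENNReal.ofReal '' {r : ℝ | 2 ≤ r ∧ HasCircularColoring G σ r})

/-- A graph is planar if it has an embedding in the plane: points for vertices and
injective continuous arcs for edges, where an arc joins the endpoints of its edge,
the interior of an arc avoids all vertex points, and two distinct arcs meet only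
at vertex points (hence only at common endpoints). -/
def IsPlanar {V : Type*} (G : SimpleGraph V) : Prop :=
  ∃ (p : V → ℝ × ℝ) (γ : Sym2 V → unitInterval → ℝ × ℝ),
    Function.Injective p ∧
    (∀ e ∈ G.edgeSet, Continuous (γ e) ∧ Function.Injective (γ e)) ∧
    (∀ u v, G.Adj u v → ({γ s(u, v) 0, γ s(u, v) 1} : Set (ℝ × ℝ)) = {p u, p v}) ∧
    (∀ e ∈ G.edgeSet, ∀ t : unitInterval, t ≠ 0 → t ≠ 1 → γ e t ∉ Set.range p) ∧
    (∀ e ∈ G.edgeSet, ∀ e' ∈ G.edgeSet, e ≠ e' → ∀ s t : unitInterval,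
      γ e s = γ e' t → γ e s ∈ Set.range p)

/-- A graph is bipartite if its vertex set splits into a part `A` and its complement
such that every edge joins the two parts. -/
def IsBipartiteGraph {V : Type*} (G : SimpleGraph V) : Prop :=
  ∃ A : Set V, ∀ u v, G.Adj u v → (u ∈ A ↔ v ∉ A)

/-- A graph is 2-degenerate if every nonempty (induced) subgraph has a vertex of
degree at most 2 in it. -/
def TwoDegenerate {V : Type*} (G : SimpleGraph V) : Prop :=
  ∀ s : Set V, s.Nonempty → ∃ v ∈ s, ({u ∈ s | G.Adj v u}).ncard ≤ 2

/-! ### Edge constraints on the circle -/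

/-- The forbidden difference of end colors, in units of `r` and modulo `1`: `0` for a positive
edge and `1 / 2` for a negative one. -/
noncomputable def edgeOffset (b : Bool) : ℝ := if b then 0 else 1 / 2

/-- `d` has distance at least `c` from `edgeOffset b * r` on the circle `ℝ / rℤ`. -/
def FarMod (r c : ℝ) (b : Bool) (d : ℝ) : Prop :=
  ∀ k : ℤ, c ≤ |d - (k + edgeOffset b) * r|

/-- The constraint of an edge does not depend on its orientation, since `0` and `1 / 2` are their
own negatives modulo `1`. -/
lemma FarMod.neg {r c d : ℝ} {b : Bool} (h : FarMod r c b d) : FarMod r c b (-d) := by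
  intro k
  cases b
  · have := h (-k - 1)
    rw [← abs_neg]
    convert this using 2
    simp only [edgeOffset]
    push_cast
    norm_num
    ring
  · have := h (-k)
    rw [← abs_neg]
    convert this using 2
    simp only [edgeOffset]
    push_cast
    ring

lemma FarMod.sub_comm {r c x y : ℝ} {b : Bool} (h : FarMod r c b (x - y)) :
    FarMod r c b (y - x) := by
  simpa using h.neg

lemma FarMod.perturb {r c c' d d' : ℝ} {b : Bool} (h : FarMod r c b d)
    (hd : |d - d'| ≤ c - c') : FarMod r c' b d' := by
  intro k
  have h1 := h k
  have h2 := abs_sub_abs_le_abs_sub (d - (k + edgeOffset b) * r) (d' - (k + edgeOffset b) * r)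
  rw [sub_sub_sub_cancel_right] at h2
  linarith

lemma FarMod.dilate {r c d : ℝ} {b : Bool} (hc : 0 ≤ c) (h : FarMod r 1 b d) :
    FarMod (c * r) c b (c * d) := by
  intro k
  rw [show c * d - (k + edgeOffset b) * (c * r) = c * (d - (k + edgeOffset b) * r) by ring, abs_mul,
    abs_of_nonneg hc]
  exact le_mul_of_one_le_right hc (h k)

/-- A number in `[1, r - 1]` is far from every multiple of `r`. -/
lemma one_le_abs_sub_int_mul {r d : ℝ} (h1 : 1 ≤ d) (h2 : d ≤ r - 1) (k : ℤ) :
    1 ≤ |d - k * r| := by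
  rcases le_or_gt k 0 with hk | hk
  · have : (k : ℝ) ≤ 0 := by exact_mod_cast hk
    exact le_abs.2 (Or.inl (by nlinarith))
  · have : (1 : ℝ) ≤ k := by exact_mod_cast hk
    exact le_abs.2 (Or.inr (by nlinarith))

/-- For differences of colors in `[0, r)`, the inequalities defining a circular coloring are the
condition `FarMod`. -/
lemma farMod_iff {r d : ℝ} (hr : 2 ≤ r) (b : Bool) (hd : |d| < r) :
    FarMod r 1 b d ↔
      if b then 1 ≤ |d| ∧ |d| ≤ r - 1 else |d| ≤ r / 2 - 1 ∨ r / 2 + 1 ≤ |d| := by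
  wlog h0 : 0 ≤ d generalizing d
  · have h := this (d := -d) (by rwa [abs_neg]) (by linarith)
    rw [abs_neg] at h
    rw [← h]
    exact ⟨FarMod.neg, fun h => by simpa using h.neg⟩
  rw [abs_of_nonneg h0] at hd ⊢
  cases b
  · simp only [FarMod, edgeOffset, Bool.false_eq_true, if_false]
    constructor
    · intro h
      have := h 0
      rcases le_abs.1 this with h | h <;> push_cast at h
      · right; linarith
      · left; linarith
    · intro h k
      rcases lt_trichotomy k 0 with hk | rfl | hk
      · have : (k : ℝ) ≤ -1 := by exact_mod_cast Int.le_sub_one_of_lt hk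
        exact le_abs.2 (Or.inl (by nlinarith))
      · rw [le_abs]
        push_cast
        rcases h with h | h
        · right; linarith
        · left; linarith
      · have : (1 : ℝ) ≤ k := by exact_mod_cast hk
        exact le_abs.2 (Or.inr (by nlinarith))
  · simp only [FarMod, edgeOffset, if_true, add_zero]
    constructor
    · intro h
      have h1 := h 0
      have h2 := h 1
      push_cast at h1 h2
      rw [zero_mul, sub_zero, abs_of_nonneg h0] at h1
      rw [one_mul, abs_of_neg (by linarith)] at h2
      exact ⟨h1, by linarith⟩
    · intro h k
      exact one_le_abs_sub_int_mul h.1 h.2 k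

lemma FarMod.sub_int_mul {r c d : ℝ} {b : Bool} (h : FarMod r c b d) (m : ℤ) :
    FarMod r c b (d - m * r) := by
  intro k
  convert h (k + m) using 2
  push_cast
  ring

/-! ### Colorings with real colors modulo `r` -/

/-- A circular `r`-coloring may be given by arbitrary real colors, read modulo `r`. -/
lemma hasCircularColoring_iff {V : Type*} (G : SimpleGraph V) (σ : Sym2 V → Bool) {r : ℝ}
    (hr : 2 ≤ r) :
    HasCircularColoring G σ r ↔
      ∃ g : V → ℝ, ∀ u v, G.Adj u v → FarMod r 1 (σ s(u, v)) (g u - g v) := by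
  have hr0 : 0 < r := by linarith
  have habs : ∀ f : V → ℝ, (∀ v, 0 ≤ f v ∧ f v < r) → ∀ u v, |f u - f v| < r := by
    intro f hf u v
    have hu := hf u
    have hv := hf v
    exact abs_lt.2 ⟨by linarith, by linarith⟩
  constructor
  · rintro ⟨f, hf, hadj⟩
    exact ⟨f, fun u v huv => (farMod_iff hr _ (habs f hf u v)).2 (hadj u v huv)⟩
  · rintro ⟨g, hg⟩
    have hf : ∀ v, 0 ≤ toIcoMod hr0 0 (g v) ∧ toIcoMod hr0 0 (g v) < r := by
      intro v
      simpa using toIcoMod_mem_Ico hr0 0 (g v)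
    refine ⟨fun v => toIcoMod hr0 0 (g v), hf, fun u v huv => ?_⟩
    refine (farMod_iff hr _ (habs _ hf u v)).1 ?_
    convert (hg u v huv).sub_int_mul (toIcoDiv hr0 0 (g u) - toIcoDiv hr0 0 (g v)) using 1
    simp only [toIcoMod, zsmul_eq_mul]
    push_cast
    ring

/-! ### Freeing a color for a vertex of degree two -/

/-- On a circle of circumference `r = 4 - 2 * δ`, two open arcs of length `2` fail to cover the
circle after moving one of them by at most `δ`. -/
lemma exists_free_color {r δ : ℝ} (hr : 2 ≤ r) (hδ : r = 4 - 2 * δ) (hδ0 : 0 ≤ δ) (A B : ℝ) :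
    ∃ t x : ℝ, |t| ≤ δ ∧ (∀ k : ℤ, 1 ≤ |x - (A + t) - k * r|) ∧
      ∀ k : ℤ, 1 ≤ |x - B - k * r| := by
  have hr0 : 0 < r := by linarith
  -- `D` is the position of `A` relative to `B` on the circle.
  obtain ⟨D, hD⟩ : ∃ D, D = toIcoMod hr0 0 (A - B) := ⟨_, rfl⟩
  obtain ⟨m, hm⟩ : ∃ m : ℤ, A = B + D + m * r := by
    refine ⟨toIcoDiv hr0 0 (A - B), ?_⟩
    rw [hD]
    simp only [toIcoMod, zsmul_eq_mul]
    ring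
  have hD0 : 0 ≤ D ∧ D < r := by
    rw [hD]
    simpa using toIcoMod_mem_Ico hr0 0 (A - B)
  rcases le_total D (2 - δ) with h | h
  · -- Here the free color sits just after the arc around `A + t`.
    refine ⟨min 0 (2 - 2 * δ - D), B + (D + min 0 (2 - 2 * δ - D)) + 1, ?_, fun k => ?_, fun k => ?_⟩
    · rw [abs_of_nonpos (min_le_left _ _)]
      rcases min_cases 0 (2 - 2 * δ - D) with ⟨h1, h2⟩ | ⟨h1, h2⟩ <;> rw [h1] <;> linarith
    · convert one_le_abs_sub_int_mul (r := r) (d := 1) le_rfl (by linarith) (k + m) using 2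
      rw [hm]
      push_cast
      ring
    · refine one_le_abs_sub_int_mul ?_ ?_ k <;>
      rcases min_cases 0 (2 - 2 * δ - D) with ⟨h1, h2⟩ | ⟨h1, h2⟩ <;> rw [h1] <;> linarith
  · -- Here the free color sits just after the arc around `B`.
    refine ⟨max 0 (2 - D), B + 1, ?_, fun k => ?_, fun k => ?_⟩
    · rw [abs_of_nonneg (le_max_left _ _)]
      rcases max_cases 0 (2 - D) with ⟨h1, h2⟩ | ⟨h1, h2⟩ <;> rw [h1] <;> linarith
    · convert one_le_abs_sub_int_mul (r := r) (d := 1 - (D + max 0 (2 - D)) + r) ?_ ?_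
        (k + m + 1) using 2
      · rw [hm]
        push_cast
        ring
      all_goals
        rcases max_cases 0 (2 - D) with ⟨h1, h2⟩ | ⟨h1, h2⟩ <;> rw [h1] <;> linarith
    · convert one_le_abs_sub_int_mul (r := r) (d := 1) le_rfl (by linarith) k using 2
      ring

lemma circChrom_lt_four_iff {V : Type*} (G : SimpleGraph V) (σ : Sym2 V → Bool) :
    circChrom G σ < 4 ↔ ∃ r : ℝ, 2 ≤ r ∧ r < 4 ∧ HasCircularColoring G σ r := by
  have h4 : ∀ r : ℝ, ENNReal.ofReal r < 4 ↔ r < 4 := by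
    intro r
    rw [show (4 : ℝ≥0∞) = ENNReal.ofReal 4 by norm_num]
    exact ENNReal.ofReal_lt_ofReal_iff (by norm_num)
  simp only [circChrom, sInf_lt_iff, Set.exists_mem_image, Set.mem_ofPred_eq, h4]
  constructor
  · rintro ⟨r, ⟨h1, h2⟩, h3⟩
    exact ⟨r, h1, h3, h2⟩
  · rintro ⟨r, h1, h3, h2⟩
    exact ⟨r, ⟨h1, h2⟩, h3⟩

/-- If `(G, σ)` is a signed simple graph with a vertex `w` of degree 2, and the signed
graph obtained by deleting `w` has circular chromatic number strictly less than 4,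
then so does `(G, σ)`. -/
theorem circChrom_lt_four_of_deleteVertex
    {V : Type*} [Fintype V] (G : SimpleGraph V) (σ : Sym2 V → Bool) (w : V)
    (hw : (G.neighborSet w).ncard = 2)
    (h : circChrom (G.induce {v | v ≠ w}) (fun e => σ (Sym2.map Subtype.val e)) < 4) :
    circChrom G σ < 4 := by
  classical
  obtain ⟨r₀, h2, h4, hcol⟩ := (circChrom_lt_four_iff _ _).1 h
  obtain ⟨g, hg⟩ := (hasCircularColoring_iff _ _ h2).1 hcol
  obtain ⟨u₁, u₂, hne, hN⟩ := Set.ncard_eq_two.1 hw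
  have hadj : ∀ v, G.Adj w v ↔ v = u₁ ∨ v = u₂ := by
    intro v
    rw [← SimpleGraph.mem_neighborSet, hN]
    simp
  -- The factor solves `c - 1 = (4 - c * r₀) / 2`: slack equals the displacement required.
  obtain ⟨c, hc⟩ : ∃ c, c = 6 / (r₀ + 2) := ⟨_, rfl⟩
  have hcr : c * r₀ = 4 - 2 * (c - 1) := by
    rw [hc]
    field_simp
    ring
  have hc1 : 1 < c := by
    rw [hc, lt_div_iff₀ (by linarith)]
    linarith
  have hr2 : 2 ≤ c * r₀ := by nlinarith
  -- The dilated coloring, with a junk color at `w`.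
  obtain ⟨G', hG'⟩ : ∃ G' : V → ℝ, ∀ u v, u ≠ w → v ≠ w → G.Adj u v →
      FarMod (c * r₀) c (σ s(u, v)) (G' u - G' v) := by
    refine ⟨fun v => if hv : v ≠ w then c * g ⟨v, hv⟩ else 0, fun u v hu hv huv => ?_⟩
    have := (hg ⟨u, hu⟩ ⟨v, hv⟩ huv).dilate (c := c) (by linarith)
    simp only [hu, hv, ne_eq, not_false_eq_true, dif_pos]
    rw [← mul_sub]
    exact this
  obtain ⟨t, x, ht, hx₁, hx₂⟩ := exists_free_color hr2 hcr (by linarith)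
    (G' u₁ + edgeOffset (σ s(w, u₁)) * (c * r₀)) (G' u₂ + edgeOffset (σ s(w, u₂)) * (c * r₀))
  refine (circChrom_lt_four_iff _ _).2 ⟨c * r₀, hr2, by linarith, ?_⟩
  rw [hasCircularColoring_iff _ _ hr2]
  obtain ⟨F, hF⟩ : ∃ F : V → ℝ, F = fun v => if v = w then x else if v = u₁ then G' v + t else G' v :=
    ⟨_, rfl⟩
  have hu₁ : u₁ ≠ w := ((hadj u₁).2 (Or.inl rfl)).ne'
  have hu₂ : u₂ ≠ w := ((hadj u₂).2 (Or.inr rfl)).ne'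
  have hFw : ∀ v, G.Adj w v → FarMod (c * r₀) 1 (σ s(w, v)) (F w - F v) := by
    intro v hv k
    rcases (hadj v).1 hv with rfl | rfl
    · convert hx₁ k using 2
      simp only [hF, hu₁, if_true, if_false]
      ring
    · convert hx₂ k using 2
      simp only [hF, hu₂, hne.symm, if_true, if_false]
      ring
  refine ⟨F, fun u v huv => ?_⟩
  by_cases hu : u = w
  · subst hu
    exact hFw v huv
  by_cases hv : v = w
  · subst hv
    rw [Sym2.eq_swap]
    exact (hFw u huv.symm).sub_comm
  refine (hG' u v hu hv huv).perturb ?_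
  -- At most one end of the edge is `u₁`, so the difference changes by at most `|t|`.
  by_cases h1 : u = u₁
  · have h2' : v ≠ u₁ := fun h => huv.ne (h1.trans h.symm)
    simp only [hF, hu, hv, h2', if_false, if_pos h1]
    rw [show G' u - G' v - (G' u + t - G' v) = -t by ring, abs_neg]
    exact ht
  by_cases h2' : v = u₁
  · simp only [hF, hu, hv, h1, if_false, if_pos h2']
    rw [show G' u - G' v - (G' u - (G' v + t)) = t by ring]
    exact ht
  · simp only [hF, hu, hv, h1, h2', if_false, sub_self, abs_zero]
    linarith
end

section
/- Every signed 2-degenerate simple graph (G, σ) has circular chromatic number strictly less than 4; that is, there exists ε > 0 (depending on (G, σ)) such that (G, σ) admits a circular (4 − ε)-coloring. -/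
/-!
Rescale the circle of circumference `r` to `ℝ / ℤ` and put `c = 1 / r`. An edge `uv` then says that
`g u - g v - τ` is at distance at least `c` from every integer, where `τ = 0` on positive edges and
`τ = 1 / 2` on negative ones (`Far`, `shift`). The theorem becomes: some `c > 1 / 4` works.

The vertices are inserted in a degeneracy order (`exists_far_coloring`). A new vertex `v` with
earlier neighbours `x`, `y` must avoid two arcs of radius `c`. For `c` barely above `1 / 4` they
cover the circle only when their centres are almost antipodal. A coloring for `c = 1 / 4 + η` is
also one for any smaller `c' > 1 / 4`, now with slack `c - c'` on every edge. This slack allows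
moving `x` alone so that the centre of its arc comes closer to that of `y`, which opens a gap whose
midpoint is a legal color for `v`.
-/

open scoped ENNReal

/-- `z` is at distance at least `c` from every integer, i.e. from `0` in `ℝ / ℤ`. -/
def Far (c z : ℝ) : Prop := ∀ k : ℤ, c ≤ |z - k|

/-- The shift attached to an edge on the circle of circumference `1`: a negative edge constrains
the antipode of a color in the way a positive edge constrains the color itself. -/
noncomputable def shift {V : Type*} (σ : Sym2 V → Bool) (u v : V) : ℝ :=
  if σ s(u, v) then 0 else 1 / 2

lemma Far.perturb {c c' z z' : ℝ} (h : Far c z) (hz : |z' - z| ≤ c - c') : Far c' z' := by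
  intro k
  have h1 := h k
  have h2 : |z - k| ≤ |z' - k| + |z' - z| := by
    have := abs_sub (z' - k) (z' - z)
    rwa [show z' - k - (z' - z) = z - k by ring] at this
  linarith

lemma Far.symm {V : Type*} {σ : Sym2 V → Bool} {c a b : ℝ} {u v : V}
    (h : Far c (a - b - shift σ u v)) : Far c (b - a - shift σ v u) := by
  intro k
  unfold Far shift at *
  rw [Sym2.eq_swap (a := v)]
  split_ifs with hs
  · simp only [hs, if_true] at h
    have := h (-k)
    rw [← abs_neg]; push_cast at this
    convert this using 2; ring
  · simp only [hs] at h
    have := h (-k - 1)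
    rw [← abs_neg]; push_cast at this
    convert this using 2
    norm_num
    ring

lemma far_half_add {c z : ℝ} (n : ℤ) (h : |z| ≤ 1 / 2 - c) : Far c (z + 1 / 2 + n) := by
  intro k
  rw [abs_le] at h
  rcases lt_or_ge n k with hk | hk
  · have : (n : ℝ) + 1 ≤ k := by exact_mod_cast hk
    rw [le_abs]; right; linarith
  · have : (k : ℝ) ≤ n := by exact_mod_cast hk
    rw [le_abs]; left; linarith

lemma exists_subset_pair {V : Type*} [Finite V] (v : V) (s : Set V) (h : s.ncard ≤ 2) :
    ∃ x y, s ⊆ {x, y} := by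
  interval_cases hs : s.ncard
  · rw [Set.ncard_eq_zero] at hs
    exact ⟨v, v, by simp [hs]⟩
  · obtain ⟨a, rfl⟩ := Set.ncard_eq_one.1 hs
    exact ⟨a, a, by simp⟩
  · obtain ⟨a, b, -, rfl⟩ := Set.ncard_eq_two.1 hs
    exact ⟨a, b, subset_rfl⟩

/-- The induction along a degeneracy order: every induced subgraph has a coloring on `ℝ / ℤ` with
gap strictly larger than `1 / 4`. -/
lemma exists_far_coloring {V : Type*} [Fintype V] (G : SimpleGraph V) (σ : Sym2 V → Bool)
    (hdeg : TwoDegenerate G) (S : Finset V) :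
    ∃ c : ℝ, 1 / 4 < c ∧ ∃ g : V → ℝ, ∀ u ∈ S, ∀ v ∈ S, G.Adj u v →
      Far c (g u - g v - shift σ u v) := by
  classical
  induction S using Finset.strongInduction with
  | H S ih =>
    rcases S.eq_empty_or_nonempty with rfl | hne
    · exact ⟨1, by norm_num, 0, by simp⟩
    obtain ⟨v, hv, hcard⟩ := hdeg (S : Set V) (by simpa using hne)
    have hv : v ∈ S := by simpa using hv
    obtain ⟨c, hc, g, hg⟩ := ih (S.erase v) (Finset.erase_ssubset hv)
    obtain ⟨x, y, hxy⟩ := exists_subset_pair v _ hcard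
    obtain ⟨l, l0, l1, lc⟩ : ∃ l : ℝ, 0 < l ∧ l ≤ 1 ∧ 1 / 4 + l ≤ c :=
      ⟨min (c - 1 / 4) 1, lt_min (by linarith) one_pos, min_le_right _ _,
        by linarith [min_le_left (c - 1 / 4) 1]⟩
    -- `d` is the difference of the centres of the two forbidden arcs, `a` its representative in
    -- `[-1/2, 1/2]`.
    set d : ℝ := g x + shift σ v x - (g y + shift σ v y) with hd
    set a : ℝ := d - round d with ha
    have ha2 : |a| ≤ 1 / 2 := abs_sub_round d
    have hmid : |(1 - l) * a / 2| ≤ 1 / 2 - (1 / 4 + l / 4) := by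
      rw [abs_div, abs_mul, abs_of_nonneg (by linarith : 0 ≤ 1 - l), abs_two]
      nlinarith
    have hmove : |l * a| ≤ c - (1 / 4 + l / 4) := by
      rw [abs_mul, abs_of_pos l0]
      nlinarith
    -- `x` moves by `l * a` towards `y`; `v` gets the point opposite to the middle of the two
    -- arc centres.
    set g₁ : V → ℝ := Function.update g x (g x - l * a) with hg₁
    set w : ℝ := g y + shift σ v y + (1 - l) * a / 2 + 1 / 2 with hw
    have hg₁x : g₁ x = g x - l * a := by simp [hg₁]
    have hg₁y : g₁ y = g y := by
      by_cases h : y = x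
      · have hd0 : d = 0 := by rw [hd, h]; ring
        have : a = 0 := by rw [ha, hd0]; simp
        rw [h, hg₁x, this]; ring
      · simp [hg₁, h]
    have hnew : ∀ u ∈ S, G.Adj v u → Far (1 / 4 + l / 4) (w - g₁ u - shift σ v u) := by
      intro u hu huv
      have hu' : u = x ∨ u = y := by simpa using hxy (show u ∈ _ from ⟨by simpa using hu, huv⟩)
      rcases hu' with rfl | rfl
      · rw [hg₁x]
        have := far_half_add (-round d) (by rwa [abs_neg] : |-((1 - l) * a / 2)| ≤ _)
        convert this using 1
        have hda : d = a + round d := by rw [ha]; ring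
        push_cast
        linarith
      · rw [hg₁y]
        have := far_half_add 0 hmid
        convert this using 1
        push_cast
        linarith
    have hold : ∀ p ∈ S.erase v, ∀ q ∈ S.erase v, G.Adj p q →
        Far (1 / 4 + l / 4) (g₁ p - g₁ q - shift σ p q) := by
      intro p hp q hq hpq
      refine (hg p hp q hq hpq).perturb ?_
      by_cases h1 : p = x
      · have h2 : q ≠ x := fun h => hpq.ne (h1.trans h.symm)
        rw [h1, hg₁x, show g₁ q = g q by simp [hg₁, h2], ← abs_neg]
        convert hmove using 2
        ring
      · by_cases h2 : q = x
        · rw [h2, hg₁x, show g₁ p = g p by simp [hg₁, h1]]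
          convert hmove using 2
          ring
        · rw [show g₁ p = g p by simp [hg₁, h1], show g₁ q = g q by simp [hg₁, h2], sub_self,
            abs_zero]
          exact (abs_nonneg _).trans hmove
    refine ⟨1 / 4 + l / 4, by linarith, Function.update g₁ v w, ?_⟩
    intro p hp q hq hpq
    by_cases h1 : p = v
    · subst h1
      have h2 : q ≠ p := hpq.ne'
      simpa [Function.update_of_ne h2] using hnew q hq hpq
    · by_cases h2 : q = v
      · subst h2
        simpa [Function.update_of_ne h1] using (hnew p hp hpq.symm).symm
      · simpa [Function.update_of_ne h1, Function.update_of_ne h2] using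
          hold p (Finset.mem_erase.2 ⟨h1, hp⟩) q (Finset.mem_erase.2 ⟨h2, hq⟩) hpq

/-- Back from `ℝ / ℤ` to the interval `[0, r)`. -/
lemma hasCircularColoring_of_far {V : Type*} (G : SimpleGraph V) (σ : Sym2 V → Bool)
    {r : ℝ} (hr : 0 < r) (g : V → ℝ)
    (hg : ∀ u v, G.Adj u v → Far (1 / r) (g u - g v - shift σ u v)) :
    HasCircularColoring G σ r := by
  refine ⟨fun v => r * Int.fract (g v), fun v => ⟨mul_nonneg hr.le (Int.fract_nonneg _), ?_⟩, ?_⟩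
  · have := mul_lt_mul_of_pos_left (Int.fract_lt_one (g v)) hr
    simpa using this
  intro u v huv
  have key : ∀ k : ℤ, 1 ≤ |r * Int.fract (g u) - r * Int.fract (g v) - r * shift σ u v - r * k| := by
    intro k
    have h := hg u v huv (k + ⌊g u⌋ - ⌊g v⌋)
    have e : r * Int.fract (g u) - r * Int.fract (g v) - r * shift σ u v - r * k
        = r * (g u - g v - shift σ u v - ((k + ⌊g u⌋ - ⌊g v⌋ : ℤ) : ℝ)) := by
      unfold Int.fract; push_cast; ring
    rw [e, abs_mul, abs_of_pos hr]
    rwa [div_le_iff₀' hr] at h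
  have bu := Int.fract_nonneg (g u)
  have bu' := Int.fract_lt_one (g u)
  have bv := Int.fract_nonneg (g v)
  have bv' := Int.fract_lt_one (g v)
  have hD : |r * Int.fract (g u) - r * Int.fract (g v)| < r := by
    rw [abs_lt]; constructor <;> nlinarith
  set D := r * Int.fract (g u) - r * Int.fract (g v) with hDdef
  have k0 := key 0
  have k1 := key 1
  have k2 := key (-1)
  rw [abs_lt] at hD
  unfold shift at k0 k1 k2
  split_ifs with hs
  · simp only [hs, if_true] at k0 k1 k2
    push_cast at k0 k1 k2
    rw [abs_of_nonpos (by linarith)] at k1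
    rw [abs_of_nonneg (by linarith)] at k2
    refine ⟨by simpa using k0, abs_le.2 ⟨by linarith, by linarith⟩⟩
  · simp only [hs] at k0 k2
    push_cast at k0 k2
    rw [le_abs] at k0 k2
    norm_num at k0 k2
    rcases abs_cases D with ⟨h, h'⟩ | ⟨h, h'⟩ <;> rw [h]
    · rcases k0 with k | k
      · right; linarith
      · left; linarith
    · rcases k2 with k | k
      · left; linarith
      · right; linarith

/-- Every signed 2-degenerate simple graph has circular chromatic number strictly less
than 4: there is an `ε > 0` such that it admits a circular `(4 - ε)`-coloring. -/
theorem circChrom_lt_four_of_twoDegenerate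
    {V : Type*} [Fintype V] (G : SimpleGraph V) (σ : Sym2 V → Bool)
    (hdeg : TwoDegenerate G) :
    (∃ ε : ℝ, 0 < ε ∧ HasCircularColoring G σ (4 - ε)) ∧ circChrom G σ < 4 := by
  obtain ⟨c, hc, g, hg⟩ := exists_far_coloring G σ hdeg Finset.univ
  -- `circChrom` only admits `r ≥ 2`, so the gap is capped at `1 / 2`.
  obtain ⟨b, hb, hb2, hbc⟩ : ∃ b : ℝ, 1 / 4 < b ∧ b ≤ 1 / 2 ∧ b ≤ c :=
    ⟨min c (1 / 2), lt_min hc (by norm_num), min_le_right _ _, min_le_left _ _⟩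
  have hb0 : 0 < b := by linarith
  have h4 : 1 / b < 4 := by rw [div_lt_iff₀ hb0]; linarith
  have h2 : 2 ≤ 1 / b := by rw [le_div_iff₀ hb0]; linarith
  have hcol : HasCircularColoring G σ (1 / b) := by
    refine hasCircularColoring_of_far G σ (by positivity) g fun u v huv k => ?_
    rw [one_div_one_div]
    exact hbc.trans (hg u (Finset.mem_univ _) v (Finset.mem_univ _) huv k)
  refine ⟨⟨4 - 1 / b, by linarith, by rwa [sub_sub_cancel]⟩, ?_⟩
  have hle : circChrom G σ ≤ ENNReal.ofReal (1 / b) := sInf_le ⟨1 / b, ⟨h2, hcol⟩, rfl⟩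
  refine hle.trans_lt ?_
  rw [ENNReal.ofReal_lt_iff_lt_toReal (by linarith) (by norm_num)]
  simpa using h4
end

section
/- If (G, σ) is a signed 2-degenerate simple graph on n vertices where n is odd, then χ_c(G, σ) ≤ 4 − 4/(n+1). -/
/-!
Up to switching, an edge only asks the two colours on a circle of length `r` to be at distance
at least `1`. For `r` slightly below `4`, cut the circle into four quadrants of length about `1`
and record a point by its quadrant `q : Fin 4` and its height `z` inside the quadrant. If all
heights are distinct, the constraint on a (positive) edge is purely combinatorial: the quadrants
differ, and if they are consecutive then the endpoint in the later quadrant has the larger height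
(`Compat`). A negative edge is the same constraint after moving one end by two quadrants.

* Any two constraints coming from points of distinct heights can be satisfied simultaneously by a
  point of fresh height (`exists_compat`), so a 2-degenerate signed graph has such a
  quadrant-and-height assignment, by removing a vertex of degree at most 2 (`exists_assignment`).
* Only the order of the heights matters. Write `n = 2m - 1` and replace heights by ranks
  `p < n`. Measured in units of `1/m`, the circle of length `4 - 4/(n+1)` has `2n` units and
  distance `1` is `m` units. Placing a vertex of rank `p` at offset `⌈p/2⌉` in an even quadrant
  and at offset `⌊p/2⌋` in an odd one, the quadrants starting at `0, m, n, n + m`, gives an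
  honest circular coloring (`place`, `place_pos`, `place_neg`).
-/


open scoped ENNReal

namespace SignedTwoDegenerate

/-- The limiting form, as `r` tends to `4` from below, of being at circular distance at least `1`,
for the points at heights `z`, `z'` of the quadrants `q`, `q'`. -/
def Compat (q : Fin 4) (z : ℝ) (q' : Fin 4) (z' : ℝ) : Prop :=
  q ≠ q' ∧ (q' = q + 1 → z < z') ∧ (q = q' + 1 → z' < z)

/-- The number of quadrants by which the sign of an edge rotates an endpoint:
half a turn for a negative edge. -/
def shift (s : Bool) : Fin 4 := if s then 0 else 2

lemma Compat.symm {q q' : Fin 4} {z z' : ℝ} (h : Compat q z q' z') : Compat q' z' q z :=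
  ⟨h.1.symm, h.2.2, h.2.1⟩

lemma compat_shift {q q' : Fin 4} {z z' : ℝ} (s : Bool) (h : Compat (q + shift s) z q' z') :
    Compat q z (q' + shift s) z' := by
  have key : ∀ (s : Bool) (a b : Fin 4), (a = b + shift s ↔ a + shift s = b) ∧
      (b + shift s = a + 1 ↔ b = a + shift s + 1) ∧
      (a = b + shift s + 1 ↔ a + shift s = b + 1) := by
    unfold shift; decide
  obtain ⟨h1, h2, h3⟩ := h
  obtain ⟨k1, k2, k3⟩ := key s q q'
  exact ⟨fun e => h1 (k1.1 e), fun e => h2 (k2.1 e), fun e => h3 (k3.1 e)⟩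

lemma compat_add_one {q : Fin 4} {z z' : ℝ} (h : z < z') : Compat q z (q + 1) z' := by
  have key : ∀ q : Fin 4, q ≠ q + 1 ∧ q ≠ q + 1 + 1 := by decide
  exact ⟨(key q).1, fun _ => h, fun e => absurd e (key q).2⟩

lemma compat_add_two (q : Fin 4) (z z' : ℝ) : Compat q z (q + 2) z' := by
  have key : ∀ q : Fin 4, q ≠ q + 2 ∧ q + 2 ≠ q + 1 ∧ q ≠ q + 2 + 1 := by decide
  exact ⟨(key q).1, fun e => absurd e (key q).2.1, fun e => absurd e (key q).2.2⟩

lemma compat_add_three {q : Fin 4} {z z' : ℝ} (h : z' < z) : Compat q z (q + 3) z' := by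
  have key : ∀ q : Fin 4, q ≠ q + 3 ∧ q + 3 ≠ q + 1 := by decide
  exact ⟨(key q).1, fun e => absurd e (key q).2, fun _ => h⟩

lemma exists_fresh (T : Finset ℝ) {a b : ℝ} (h : a < b) : ∃ z, a < z ∧ z < b ∧ z ∉ T := by
  obtain ⟨z, hz, hzT⟩ := (Set.Ioo_infinite h).exists_notMem_finset T
  exact ⟨z, hz.1, hz.2, hzT⟩

lemma exists_compat_of_lt (T : Finset ℝ) (qa qb : Fin 4) {za zb : ℝ} (h : za < zb) :
    ∃ q z, z ∉ T ∧ Compat qa za q z ∧ Compat qb zb q z := by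
  have key : ∀ a b : Fin 4, b = a ∨ b = a + 1 ∨ b = a + 2 ∨ b = a + 3 := by decide
  rcases key qa qb with rfl | rfl | rfl | rfl
  · obtain ⟨z, -, -, hz⟩ := exists_fresh T h
    exact ⟨_, z, hz, compat_add_two _ _ _, compat_add_two _ _ _⟩
  · obtain ⟨z, h1, -, hz⟩ := exists_fresh T (lt_add_one zb)
    refine ⟨qa + 1 + 1, z, hz, ?_, compat_add_one h1⟩
    have : qa + 1 + 1 = qa + 2 := by rw [add_assoc]; rfl
    rw [this]
    exact compat_add_two _ _ _
  · obtain ⟨z, h1, h2, hz⟩ := exists_fresh T h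
    refine ⟨qa + 1, z, hz, compat_add_one h1, ?_⟩
    have : qa + 1 = qa + 2 + 3 := by rw [add_assoc]; rfl
    rw [this]
    exact compat_add_three h2
  · obtain ⟨z, h1, -, hz⟩ := exists_fresh T (lt_add_one za)
    refine ⟨qa + 1, z, hz, compat_add_one h1, ?_⟩
    have : qa + 1 = qa + 3 + 2 := by rw [add_assoc]; rfl
    rw [this]
    exact compat_add_two _ _ _

/-- Two constraints from points of distinct heights (or from one and the same point) can be met by
a point whose height avoids any given finite set. -/
lemma exists_compat (T : Finset ℝ) (qa qb : Fin 4) (za zb : ℝ) (h : za = zb → qa = qb) :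
    ∃ q z, z ∉ T ∧ Compat qa za q z ∧ Compat qb zb q z := by
  rcases lt_trichotomy za zb with hlt | heq | hgt
  · exact exists_compat_of_lt T qa qb hlt
  · obtain rfl := h heq
    obtain ⟨z, -, -, hz⟩ := exists_fresh T (lt_add_one za)
    exact ⟨_, z, hz, compat_add_two _ _ _, compat_add_two _ _ _⟩
  · obtain ⟨q, z, hz, h1, h2⟩ := exists_compat_of_lt T qb qa hgt
    exact ⟨q, z, hz, h2, h1⟩

open scoped Classical in
/-- The vertices of a 2-degenerate signed graph can be given quadrants and pairwise distinct
heights so that every edge is satisfied. -/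
lemma exists_assignment {V : Type*} (G : SimpleGraph V) (σ : Sym2 V → Bool)
    (hdeg : TwoDegenerate G) (S : Finset V) :
    ∃ (q : V → Fin 4) (z : V → ℝ), Set.InjOn z S ∧
      ∀ u ∈ S, ∀ v ∈ S, G.Adj u v → Compat (q u) (z u) (q v + shift (σ s(u, v))) (z v) := by
  induction S using Finset.strongInduction with
  | H S ih =>
  rcases S.eq_empty_or_nonempty with rfl | hne
  · exact ⟨fun _ => 0, fun _ => 0, by simp, by simp⟩
  obtain ⟨v, hvS, hv⟩ := hdeg (S : Set V) hne
  have hvS : v ∈ S := hvS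
  obtain ⟨q, z, hinj, hqz⟩ := ih (S.erase v) (Finset.erase_ssubset hvS)
  -- it suffices to meet the constraints coming from the neighbours of `v`
  suffices H : ∃ q₀ z₀, z₀ ∉ S.image z ∧
      ∀ u ∈ S, G.Adj v u → Compat (q u + shift (σ s(v, u))) (z u) q₀ z₀ by
    obtain ⟨q₀, z₀, hz₀, hcompat⟩ := H
    have hfresh : ∀ u ∈ S, z u ≠ z₀ := fun u hu e => hz₀ (e ▸ Finset.mem_image_of_mem z hu)
    refine ⟨Function.update q v q₀, Function.update z v z₀, ?_, ?_⟩
    · intro a ha b hb hab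
      rw [Finset.mem_coe] at ha hb
      by_cases hav : a = v <;> by_cases hbv : b = v
      · rw [hav, hbv]
      · rw [hav, Function.update_self, Function.update_of_ne hbv] at hab
        exact absurd hab.symm (hfresh b hb)
      · rw [hbv, Function.update_self, Function.update_of_ne hav] at hab
        exact absurd hab (hfresh a ha)
      · rw [Function.update_of_ne hav, Function.update_of_ne hbv] at hab
        exact hinj (by simp [hav, ha]) (by simp [hbv, hb]) hab
    · intro a ha b hb hab
      by_cases hav : a = v <;> by_cases hbv : b = v
      · exact absurd (hav.trans hbv.symm) hab.ne
      · subst hav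
        rw [Function.update_self, Function.update_self, Function.update_of_ne hbv,
          Function.update_of_ne hbv]
        exact (hcompat b hb hab).symm
      · subst hbv
        rw [Function.update_self, Function.update_self, Function.update_of_ne hav,
          Function.update_of_ne hav, Sym2.eq_swap]
        exact compat_shift _ (hcompat a ha hab.symm)
      · rw [Function.update_of_ne hav, Function.update_of_ne hbv, Function.update_of_ne hav,
          Function.update_of_ne hbv]
        exact hqz a (Finset.mem_erase.2 ⟨hav, ha⟩) b (Finset.mem_erase.2 ⟨hbv, hb⟩) hab
  have hcover : (∀ u ∈ S, ¬ G.Adj v u) ∨ ∃ a ∈ S, ∃ b ∈ S, G.Adj v a ∧ G.Adj v b ∧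
      ∀ u ∈ S, G.Adj v u → u = a ∨ u = b := by
    have hset : ({u ∈ (S : Set V) | G.Adj v u}) = ((S.filter (G.Adj v) : Finset V) : Set V) := by
      ext u; simp
    rw [hset, Set.ncard_coe_finset] at hv
    rcases (S.filter (G.Adj v)).eq_empty_or_nonempty with h0 | ⟨a, ha⟩
    · left
      intro u hu huv
      have : u ∈ S.filter (G.Adj v) := Finset.mem_filter.2 ⟨hu, huv⟩
      simp [h0] at this
    · right
      have hcard : ((S.filter (G.Adj v)).erase a).card ≤ 1 := by
        rw [Finset.card_erase_of_mem ha]; omega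
      have ha' := Finset.mem_filter.1 ha
      rcases ((S.filter (G.Adj v)).erase a).eq_empty_or_nonempty with h1 | ⟨b, hb⟩
      · refine ⟨a, ha'.1, a, ha'.1, ha'.2, ha'.2, fun u hu huv => ?_⟩
        by_contra hne
        have : u ∈ (S.filter (G.Adj v)).erase a :=
          Finset.mem_erase.2 ⟨fun e => hne (Or.inl e), Finset.mem_filter.2 ⟨hu, huv⟩⟩
        simp [h1] at this
      · have hb' := Finset.mem_filter.1 (Finset.mem_of_mem_erase hb)
        refine ⟨a, ha'.1, b, hb'.1, ha'.2, hb'.2, fun u hu huv => ?_⟩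
        by_cases hua : u = a
        · exact Or.inl hua
        · exact Or.inr (Finset.card_le_one.1 hcard u
            (Finset.mem_erase.2 ⟨hua, Finset.mem_filter.2 ⟨hu, huv⟩⟩) b hb)
  rcases hcover with hnone | ⟨a, haS, b, hbS, hva, hvb, hab⟩
  · obtain ⟨z₀, -, -, hz₀⟩ := exists_fresh (S.image z) zero_lt_one
    exact ⟨0, z₀, hz₀, fun u hu huv => absurd huv (hnone u hu)⟩
  · obtain ⟨q₀, z₀, hz₀, h1, h2⟩ := exists_compat (S.image z) (q a + shift (σ s(v, a)))
      (q b + shift (σ s(v, b))) (z a) (z b) (by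
        intro e
        have : a = b := hinj (by simp [haS, hva.ne']) (by simp [hbS, hvb.ne']) e
        rw [this])
    refine ⟨q₀, z₀, hz₀, fun u hu huv => ?_⟩
    rcases hab u hu huv with rfl | rfl
    · exact h1
    · exact h2

/-- The position, in units of `1/m` on a circle of `4m - 2` units, of the vertex of rank `p` in
quadrant `q`. The last position of the last quadrant is the point `4m - 2`, identified with `0`. -/
def place (m p : ℕ) (q : Fin 4) : ℤ :=
  if q = 0 then (p + 1) / 2
  else if q = 1 then m + p / 2
  else if q = 2 then 2 * m - 1 + (p + 1) / 2
  else if p + 2 = 2 * m then 0 else 3 * m - 1 + p / 2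

lemma place_mem {m p : ℕ} (q : Fin 4) (hp : p + 1 < 2 * m) :
    0 ≤ place m p q ∧ place m p q < 4 * m - 2 := by
  fin_cases q <;> simp [place] <;> (try split_ifs) <;> omega

/-- The constraint `Compat` with heights replaced by ranks. -/
def RankCompat (q : Fin 4) (p : ℕ) (q' : Fin 4) (p' : ℕ) : Prop :=
  q ≠ q' ∧ (q' = q + 1 → p < p') ∧ (q = q' + 1 → p' < p)

lemma place_pos {m p p' : ℕ} {q q' : Fin 4} (hp : p + 1 < 2 * m) (hp' : p' + 1 < 2 * m)
    (h : RankCompat q p q' p') :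
    m ≤ |place m p q - place m p' q'| ∧ |place m p q - place m p' q'| ≤ 3 * m - 2 := by
  rw [le_abs, abs_le]
  fin_cases q <;> fin_cases q' <;> simp [RankCompat] at h <;> simp [place] <;>
    (try split_ifs) <;> omega

lemma place_neg {m p p' : ℕ} {q q' : Fin 4} (hp : p + 1 < 2 * m) (hp' : p' + 1 < 2 * m)
    (h : RankCompat q p (q' + 2) p') :
    |place m p q - place m p' q'| ≤ m - 1 ∨ 3 * m - 1 ≤ |place m p q - place m p' q'| := by
  rw [le_abs, abs_le]
  fin_cases q <;> fin_cases q' <;> simp [RankCompat] at h <;> simp [place] <;>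
    (try split_ifs) <;> omega

open scoped Classical in
/-- The number of vertices of smaller height. -/
noncomputable def rank {V : Type*} [Fintype V] (z : V → ℝ) (v : V) : ℕ :=
  (Finset.univ.filter fun u => z u < z v).card

lemma rank_lt_rank {V : Type*} [Fintype V] {z : V → ℝ} {u v : V} (h : z u < z v) :
    rank z u < rank z v := by
  classical
  refine Finset.card_lt_card (Finset.ssubset_iff_of_subset ?_ |>.2 ⟨u, by simpa using h, by simp⟩)
  intro w hw
  simp only [Finset.mem_filter, Finset.mem_univ, true_and] at hw ⊢
  exact hw.trans h

lemma rank_lt_card {V : Type*} [Fintype V] (z : V → ℝ) (v : V) :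
    rank z v < Fintype.card V := by
  classical
  exact Finset.card_lt_univ_of_notMem (x := v) (by simp)

lemma hasCircularColoring {V : Type*} [Fintype V] (G : SimpleGraph V) (σ : Sym2 V → Bool) (m : ℕ)
    (hcard : Fintype.card V + 1 = 2 * m) (hdeg : TwoDegenerate G) :
    HasCircularColoring G σ ((4 * m - 2) / m) := by
  obtain ⟨q, z, hinj, hqz⟩ := exists_assignment G σ hdeg Finset.univ
  have hm : (0 : ℝ) < m := by
    have : 0 < m := by omega
    exact_mod_cast this
  have hr : ∀ v, rank z v + 1 < 2 * m := fun v => by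
    have := rank_lt_card z v
    omega
  refine ⟨fun v => (place m (rank z v) (q v) : ℝ) / m, fun v => ?_, fun u v huv => ?_⟩
  · obtain ⟨h0, h1⟩ := place_mem (q v) (hr v)
    have h0' : (0 : ℝ) ≤ place m (rank z v) (q v) := by exact_mod_cast h0
    have h1' : (place m (rank z v) (q v) : ℝ) < 4 * m - 2 := by exact_mod_cast h1
    exact ⟨by positivity, div_lt_div_of_pos_right h1' hm⟩
  · have hc := hqz u (Finset.mem_univ u) v (Finset.mem_univ v) huv
    have hrc : RankCompat (q u) (rank z u) (q v + shift (σ s(u, v))) (rank z v) :=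
      ⟨hc.1, fun e => rank_lt_rank (hc.2.1 e), fun e => rank_lt_rank (hc.2.2 e)⟩
    simp only [← sub_div, abs_div, abs_of_pos hm]
    split_ifs with hs
    · have hrc' : RankCompat (q u) (rank z u) (q v) (rank z v) := by
        simpa [shift, hs] using hrc
      obtain ⟨h1, h2⟩ := place_pos (hr u) (hr v) hrc'
      have h1' : (m : ℝ) ≤ |(place m (rank z u) (q u) : ℝ) - place m (rank z v) (q v)| := by
        exact_mod_cast h1
      have h2' : |(place m (rank z u) (q u) : ℝ) - place m (rank z v) (q v)| ≤ 3 * m - 2 := by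
        exact_mod_cast h2
      have e : ((4 * m - 2) / m - 1 : ℝ) = (3 * m - 2) / m := by field_simp; ring
      rw [e, le_div_iff₀ hm, one_mul]
      exact ⟨h1', by gcongr⟩
    · have hrc' : RankCompat (q u) (rank z u) (q v + 2) (rank z v) := by
        simpa [shift, hs] using hrc
      have e : ((4 * m - 2) / m / 2 - 1 : ℝ) = (m - 1) / m := by field_simp; ring
      have e' : ((4 * m - 2) / m / 2 + 1 : ℝ) = (3 * m - 1) / m := by field_simp; ring
      rw [e, e']
      rcases place_neg (hr u) (hr v) hrc' with h | h
      · left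
        have h' : |(place m (rank z u) (q u) : ℝ) - place m (rank z v) (q v)| ≤ m - 1 := by
          exact_mod_cast h
        gcongr
      · right
        have h' : (3 * m - 1 : ℝ) ≤ |(place m (rank z u) (q u) : ℝ) - place m (rank z v) (q v)| := by
          exact_mod_cast h
        gcongr

end SignedTwoDegenerate

/-- If `(G, σ)` is a signed 2-degenerate simple graph on an odd number `n` of vertices,
then `χ_c(G, σ) ≤ 4 - 4/(n+1)`. -/
theorem circChrom_le_of_twoDegenerate_odd
    {V : Type*} [Fintype V] (G : SimpleGraph V) (σ : Sym2 V → Bool) (n : ℕ)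
    (hcard : Fintype.card V = n) (hodd : Odd n) (hdeg : TwoDegenerate G) :
    circChrom G σ ≤ ENNReal.ofReal (4 - 4 / ((n : ℝ) + 1)) := by
  obtain ⟨k, rfl⟩ := hodd
  have hval : (4 - 4 / (((2 * k + 1 : ℕ) : ℝ) + 1)) = (4 * (k + 1 : ℕ) - 2) / (k + 1 : ℕ) := by
    push_cast
    have : (k : ℝ) + 1 ≠ 0 := by positivity
    have h2 : (2 * (k : ℝ) + 1 + 1) = 2 * (k + 1) := by ring
    rw [h2]
    field_simp
    ring
  rw [hval]
  refine sInf_le ⟨_, ⟨?_, SignedTwoDegenerate.hasCircularColoring G σ (k + 1) (by omega) hdeg⟩, rfl⟩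
  rw [le_div_iff₀ (by positivity)]
  push_cast
  linarith [(Nat.cast_nonneg k : (0 : ℝ) ≤ k)]
end

section
/- For every integer i ≥ 1, the signed graph Ω_i (a signed 2-degenerate simple graph on 2i+1 vertices) satisfies χ_c(Ω_i) = (4i+2)/(i+1) = 4 − 4/(2i+2), i.e., χ_c(Ω_i) = 4 − 4/(|V(Ω_i)|+1). -/
/-!
Think of `[0, r)` as a circle of circumference `r`: a positive edge asks for circular distance at
least `1`, and a negative edge for circular distance at most `r / 2 - 1`, that is, for distance at
least `1` from the antipode. If `r < 4`, then the points compatible with two neighbors `a`, `b`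
of signs `+`, `-` form a single (possibly empty) arc whose length is the circular distance of
`a` and `b` plus `r / 2 - 2`; for two positive neighbors at distance at least `1` it is an arc
of length at most `r - 3`. The two neighbors of the last vertex of `Ω_{i+1}` are `v_{2i+1}` and
its copy, which both lie in the arc available for the last vertex of `Ω_i`. Hence the arc available
for the last vertex of `Ω_i` has length at most
`arcLen r i = (r - 3) + (i - 1) (r / 2 - 2)` (`circDist_le_arcLen`), so that an `r`-coloring
forces `arcLen r i ≥ 0`, i.e. `r ≥ (4 i + 2) / (i + 1)`.

Conversely, for this `r` the bound is attained at every level by placing each vertex and its copy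
at the two ends of the available arc. The centers of the arcs can be taken to alternate between
`(r + 1) / 2` and `(r + 1) / 2 + r / 4`, so that nothing wraps around `0` (`optColor`).
-/

open scoped ENNReal

/-- Recursive data for the signed graphs `Ω_i` (vertices indexed `0, …, 2i` correspond to
`v_1, …, v_{2i+1}`): a list of signed edges `(a, b, sign)` (`true` = positive), together
with the two neighbors (and the signs of the corresponding edges) of the last vertex.
`Ω_1` is an all-positive triangle.  `Ω_{i+1}` is obtained from `Ω_i` (whose last vertex
`2i` has neighbor data `(a, sa), (b, sb)`) by adding the vertex `2i+1` as a copy of `2i`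
(joined to `a` with sign `sa` and to `b` with sign `sb`) and then a vertex `2i+2` joined
to `2i` by a positive edge and to `2i+1` by a negative edge. -/
def omegaData : ℕ → List (ℕ × ℕ × Bool) × ((ℕ × Bool) × (ℕ × Bool))
  | 0 => ([], ((0, true), (0, true)))
  | 1 => ([(0, 1, true), (0, 2, true), (1, 2, true)], ((0, true), (1, true)))
  | j + 2 =>
      let d := omegaData (j + 1)
      (d.1 ++ [(d.2.1.1, 2 * j + 3, d.2.1.2), (d.2.2.1, 2 * j + 3, d.2.2.2),
               (2 * j + 2, 2 * j + 4, true), (2 * j + 3, 2 * j + 4, false)],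
       ((2 * j + 2, true), (2 * j + 3, false)))

/-- The list of signed edges of `Ω_i`. -/
def omegaList (i : ℕ) : List (ℕ × ℕ × Bool) := (omegaData i).1

/-- The underlying simple graph of `Ω_i`, on the vertex set `Fin (2i+1)`. -/
def OmegaGraph (i : ℕ) : SimpleGraph (Fin (2 * i + 1)) :=
  SimpleGraph.fromRel (fun u v => ∃ b : Bool, ((u : ℕ), (v : ℕ), b) ∈ omegaList i)

/-- The signature of `Ω_i`: an edge is positive iff it is recorded with sign `true`. -/
def omegaSign (i : ℕ) (e : Sym2 (Fin (2 * i + 1))) : Bool :=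
  decide (∃ u v : Fin (2 * i + 1), e = s(u, v) ∧ ((u : ℕ), (v : ℕ), true) ∈ omegaList i)

/-- The condition imposed on the colors `x`, `y` of the ends of an edge of sign `s`. -/
def EdgeOK (s : Bool) (r x y : ℝ) : Prop :=
  if s then 1 ≤ |x - y| ∧ |x - y| ≤ r - 1
  else |x - y| ≤ r / 2 - 1 ∨ r / 2 + 1 ≤ |x - y|

lemma EdgeOK.symm {s : Bool} {r x y : ℝ} (h : EdgeOK s r x y) : EdgeOK s r y x := by
  unfold EdgeOK at *
  rwa [abs_sub_comm y x]

/-- The maximal length of the arc of colors available for the last vertex of `Ω_i`. -/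
noncomputable def arcLen (r : ℝ) (i : ℕ) : ℝ := r - 3 + ((i : ℝ) - 1) * (r / 2 - 2)

/-! ### The edges of `Ω_i` -/

lemma omegaData_snd (j : ℕ) :
    (omegaData (j + 2)).2 = ((2 * j + 2, true), (2 * j + 3, false)) := rfl

lemma omegaList_succ (j : ℕ) : omegaList (j + 2) = omegaList (j + 1) ++
    [((omegaData (j + 1)).2.1.1, 2 * j + 3, (omegaData (j + 1)).2.1.2),
      ((omegaData (j + 1)).2.2.1, 2 * j + 3, (omegaData (j + 1)).2.2.2),
      (2 * j + 2, 2 * j + 4, true), (2 * j + 3, 2 * j + 4, false)] := rfl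

/-- The recorded neighbor data of the last vertex `2 j + 2` of `Ω_{j+1}` are edges of it. -/
lemma last_edges_mem (j : ℕ) :
    ((omegaData (j + 1)).2.1.1, 2 * j + 2, (omegaData (j + 1)).2.1.2) ∈ omegaList (j + 1) ∧
    ((omegaData (j + 1)).2.2.1, 2 * j + 2, (omegaData (j + 1)).2.2.2) ∈ omegaList (j + 1) := by
  cases j with
  | zero => simp [omegaList, omegaData]
  | succ k =>
    rw [omegaData_snd, omegaList_succ]
    constructor <;> simp [Nat.mul_add]

/-- Edges are recorded with increasing ends, and the sign of an edge is determined by its smaller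
end: no pair of vertices is recorded with both signs. -/
lemma omegaList_spec (i : ℕ) : ∀ a b s, (a, b, s) ∈ omegaList i →
    a < b ∧ b < 2 * i + 1 ∧ s = decide (a % 2 = 0 ∨ a = 1) := by
  match i with
  | 0 => simp [omegaList, omegaData]
  | 1 =>
    intro a b s h
    simp only [omegaList, omegaData, List.mem_cons, Prod.mk.injEq, List.not_mem_nil,
      or_false] at h
    rcases h with ⟨rfl, rfl, rfl⟩ | ⟨rfl, rfl, rfl⟩ | ⟨rfl, rfl, rfl⟩ <;> simp
  | j + 2 =>
    intro a b s h
    have ih := omegaList_spec (j + 1)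
    obtain ⟨h1, h2⟩ := last_edges_mem j
    rw [omegaList_succ] at h
    simp only [List.mem_append, List.mem_cons, Prod.mk.injEq, List.not_mem_nil,
      or_false] at h
    rcases h with h | ⟨rfl, rfl, rfl⟩ | ⟨rfl, rfl, rfl⟩ | ⟨rfl, rfl, rfl⟩ | ⟨rfl, rfl, rfl⟩
    · obtain ⟨p, q, t⟩ := ih _ _ _ h
      exact ⟨p, by omega, t⟩
    · obtain ⟨p, q, t⟩ := ih _ _ _ h1
      exact ⟨by omega, by omega, t⟩
    · obtain ⟨p, q, t⟩ := ih _ _ _ h2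
      exact ⟨by omega, by omega, t⟩
    · refine ⟨by omega, by omega, ?_⟩
      symm
      rw [decide_eq_true_iff]
      omega
    · refine ⟨by omega, by omega, ?_⟩
      symm
      rw [decide_eq_false_iff_not]
      omega

lemma omegaSign_eq {i : ℕ} {u v : Fin (2 * i + 1)} {s : Bool}
    (h : ((u : ℕ), (v : ℕ), s) ∈ omegaList i) : omegaSign i s(u, v) = s := by
  obtain ⟨h1, -, h3⟩ := omegaList_spec i _ _ _ h
  cases s with
  | true =>
    unfold omegaSign
    rw [decide_eq_true_iff]
    exact ⟨u, v, rfl, h⟩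
  | false =>
    unfold omegaSign
    rw [decide_eq_false_iff_not]
    rintro ⟨u', v', e, h'⟩
    obtain ⟨h1', -, h3'⟩ := omegaList_spec i _ _ _ h'
    rcases Sym2.eq_iff.1 e with ⟨rfl, rfl⟩ | ⟨rfl, rfl⟩
    · rw [← h3] at h3'
      simp at h3'
    · omega

lemma hasCircularColoring_iff_s9 {i : ℕ} {r : ℝ} :
    HasCircularColoring (OmegaGraph i) (omegaSign i) r ↔
      ∃ F : ℕ → ℝ, (∀ n < 2 * i + 1, 0 ≤ F n ∧ F n < r) ∧
        ∀ a b s, (a, b, s) ∈ omegaList i → EdgeOK s r (F a) (F b) := by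
  constructor
  · rintro ⟨f, hf, hE⟩
    refine ⟨fun n => if h : n < 2 * i + 1 then f ⟨n, h⟩ else 0, ?_, ?_⟩
    · intro n h
      simpa [h] using hf ⟨n, h⟩
    · intro a b s h
      obtain ⟨h1, h2, -⟩ := omegaList_spec i _ _ _ h
      have ha : a < 2 * i + 1 := by omega
      have := hE ⟨a, ha⟩ ⟨b, h2⟩ (by
        rw [OmegaGraph, SimpleGraph.fromRel_adj]
        refine ⟨?_, Or.inl ⟨s, h⟩⟩
        intro e
        have := Fin.mk.inj_iff.1 e
        omega)
      rw [omegaSign_eq (u := ⟨a, ha⟩) (v := ⟨b, h2⟩) h] at this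
      simpa [ha, h2, EdgeOK] using this
  · rintro ⟨F, hF, hE⟩
    refine ⟨fun v => F v, fun v => hF v v.2, ?_⟩
    intro u v huv
    rw [OmegaGraph, SimpleGraph.fromRel_adj] at huv
    rcases huv.2 with ⟨s, h⟩ | ⟨s, h⟩
    · rw [omegaSign_eq h]
      exact hE _ _ _ h
    · rw [Sym2.eq_swap, omegaSign_eq h]
      exact (hE _ _ _ h).symm

/-! ### The lower bound -/

/-- The circular distance of two colors in `[0, r)`. -/
noncomputable def circDist (r x y : ℝ) : ℝ := min |x - y| (r - |x - y|)

lemma circDist_le_of_pos_pos {r a b x y : ℝ}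
    (hab : EdgeOK true r a b)
    (hax : EdgeOK true r a x) (hbx : EdgeOK true r b x)
    (hay : EdgeOK true r a y) (hby : EdgeOK true r b y) (hr : r < 4) :
    circDist r x y ≤ r - 3 := by
  simp only [EdgeOK, if_true] at *
  unfold circDist
  rw [min_le_iff]
  by_contra! h
  obtain ⟨h1, h2⟩ := h
  rcases abs_cases (a - b) with ⟨e1, _⟩ | ⟨e1, _⟩ <;> rw [e1] at hab <;>
  rcases abs_cases (a - x) with ⟨e2, _⟩ | ⟨e2, _⟩ <;> rw [e2] at hax <;>
  rcases abs_cases (b - x) with ⟨e3, _⟩ | ⟨e3, _⟩ <;> rw [e3] at hbx <;>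
  first
  | (exfalso; linarith)
  | (rcases abs_cases (a - y) with ⟨e4, _⟩ | ⟨e4, _⟩ <;> rw [e4] at hay <;>
     rcases abs_cases (b - y) with ⟨e5, _⟩ | ⟨e5, _⟩ <;> rw [e5] at hby <;>
     rcases abs_cases (x - y) with ⟨e6, _⟩ | ⟨e6, _⟩ <;> rw [e6] at h1 h2 <;>
     linarith)

/-- The colors compatible with a positive neighbor `a` and a negative neighbor `b` lie in an arc
whose length is the distance of `a` and `b` plus `r / 2 - 2`. -/
lemma circDist_le_of_pos_neg {r a b x y : ℝ}
    (ha : 0 ≤ a ∧ a < r) (hb : 0 ≤ b ∧ b < r) (hx : 0 ≤ x ∧ x < r) (hy : 0 ≤ y ∧ y < r)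
    (hax : EdgeOK true r a x) (hbx : EdgeOK false r b x)
    (hay : EdgeOK true r a y) (hby : EdgeOK false r b y) (hr : r < 4) :
    circDist r x y ≤ circDist r a b + (r / 2 - 2) := by
  simp only [EdgeOK, if_true, Bool.false_eq_true, if_false] at *
  obtain ⟨ha1, ha2⟩ := ha
  obtain ⟨hb1, hb2⟩ := hb
  obtain ⟨hx1, hx2⟩ := hx
  obtain ⟨hy1, hy2⟩ := hy
  unfold circDist
  rw [← sub_le_iff_le_add, le_min_iff, sub_le_iff_le_add, sub_le_iff_le_add, min_le_iff,
    min_le_iff]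
  constructor <;> by_contra! h <;> obtain ⟨h1, h2⟩ := h <;>
  rcases abs_cases (a - b) with ⟨e1, _⟩ | ⟨e1, _⟩ <;> rw [e1] at h1 h2 <;>
  rcases abs_cases (a - x) with ⟨e2, _⟩ | ⟨e2, _⟩ <;> rw [e2] at hax <;>
  rcases abs_cases (b - x) with ⟨e3, _⟩ | ⟨e3, _⟩ <;> rw [e3] at hbx <;>
  rcases hbx with hbx | hbx <;>
  first
  | (exfalso; linarith)
  | (rcases abs_cases (a - y) with ⟨e4, _⟩ | ⟨e4, _⟩ <;> rw [e4] at hay <;>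
     rcases abs_cases (b - y) with ⟨e5, _⟩ | ⟨e5, _⟩ <;> rw [e5] at hby <;>
     rcases hby with hby | hby <;>
     rcases abs_cases (x - y) with ⟨e6, _⟩ | ⟨e6, _⟩ <;> rw [e6] at h1 h2 <;>
     linarith)

/-- Any two colors `x`, `y` available for the last vertex of `Ω_{j+1}` are at circular distance at
most `arcLen r (j + 1)`. -/
lemma circDist_le_arcLen {r : ℝ} (hr : r < 4) (F : ℕ → ℝ) (j : ℕ)
    (hF : ∀ n < 2 * (j + 1) + 1, 0 ≤ F n ∧ F n < r)
    (hE : ∀ a b s, (a, b, s) ∈ omegaList (j + 1) → EdgeOK s r (F a) (F b))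
    (x y : ℝ) (hx : 0 ≤ x ∧ x < r) (hy : 0 ≤ y ∧ y < r)
    (hx1 : EdgeOK (omegaData (j + 1)).2.1.2 r (F (omegaData (j + 1)).2.1.1) x)
    (hx2 : EdgeOK (omegaData (j + 1)).2.2.2 r (F (omegaData (j + 1)).2.2.1) x)
    (hy1 : EdgeOK (omegaData (j + 1)).2.1.2 r (F (omegaData (j + 1)).2.1.1) y)
    (hy2 : EdgeOK (omegaData (j + 1)).2.2.2 r (F (omegaData (j + 1)).2.2.1) y) :
    circDist r x y ≤ arcLen r (j + 1) := by
  induction j generalizing x y with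
  | zero =>
    have h01 := hE 0 1 true (by simp [omegaList, omegaData])
    have := circDist_le_of_pos_pos h01 hx1 hx2 hy1 hy2 hr
    simpa [arcLen] using this
  | succ k ih =>
    rw [omegaList_succ] at hE
    have hE' : ∀ a b s, (a, b, s) ∈ omegaList (k + 1) → EdgeOK s r (F a) (F b) :=
      fun a b s h => hE a b s (List.mem_append_left _ h)
    obtain ⟨m1, m2⟩ := last_edges_mem k
    -- the last vertex of the smaller graph and its copy are two available colors there
    have key := ih (fun n hn => hF n (by omega)) hE' (F (2 * k + 2)) (F (2 * k + 3))
      (hF _ (by omega)) (hF _ (by omega)) (hE' _ _ _ m1) (hE' _ _ _ m2)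
      (hE _ _ _ (by simp)) (hE _ _ _ (by simp))
    have := circDist_le_of_pos_neg (hF (2 * k + 2) (by omega)) (hF (2 * k + 3) (by omega))
      hx hy hx1 hx2 hy1 hy2 hr
    unfold arcLen at *
    push_cast at *
    linarith

lemma le_of_hasCircularColoring {i : ℕ} (hi : 1 ≤ i) {r : ℝ} (hr : 2 ≤ r)
    (h : HasCircularColoring (OmegaGraph i) (omegaSign i) r) :
    (4 * (i : ℝ) + 2) / ((i : ℝ) + 1) ≤ r := by
  rw [div_le_iff₀ (by positivity)]
  rcases le_or_gt 4 r with h4 | h4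
  · nlinarith [(Nat.cast_nonneg i : (0 : ℝ) ≤ i)]
  obtain ⟨F, hF, hE⟩ := hasCircularColoring_iff_s9.1 h
  obtain ⟨j, rfl⟩ := Nat.exists_eq_add_of_le' hi
  obtain ⟨m1, m2⟩ := last_edges_mem j
  have hl := hF (2 * j + 2) (by omega)
  have key := circDist_le_arcLen h4 F j hF hE _ _ hl hl
    (hE _ _ _ m1) (hE _ _ _ m2) (hE _ _ _ m1) (hE _ _ _ m2)
  have h0 : circDist r (F (2 * j + 2)) (F (2 * j + 2)) = 0 := by
    simp only [circDist, sub_self, abs_zero, sub_zero]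
    exact min_eq_left (by linarith)
  rw [h0, arcLen] at key
  push_cast at *
  linarith

/-! ### The optimal coloring -/

/-- The coloring of `Ω_i` in which the vertices `2 k` and `2 k + 1` (`k ≥ 1`) occupy the two ends
of an arc of length `arcLen r k`, centered at `(r + 1) / 2` (with `2 k` at the left end) for odd
`k`, and at `(r + 1) / 2 + r / 4` (with `2 k` at the right end) for even `k`. -/
noncomputable def optColor (r : ℝ) (n : ℕ) : ℝ :=
  if n = 0 then 0 else if n = 1 then 1
  else if n % 4 = 2 then (r + 1) / 2 - arcLen r (n / 2) / 2
  else if n % 4 = 3 then (r + 1) / 2 + arcLen r (n / 2) / 2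
  else if n % 4 = 0 then (r + 1) / 2 + r / 4 + arcLen r (n / 2) / 2
  else (r + 1) / 2 + r / 4 - arcLen r (n / 2) / 2

/-- The two shapes of the pair of colors of the vertices `2 k` and `2 k + 1`, `k = j + 1`. -/
lemma optColor_pair (r : ℝ) (j : ℕ) :
    ((j + 1) % 2 = 1 ∧
      optColor r (2 * j + 2) = (r + 1) / 2 - arcLen r (j + 1) / 2 ∧
      optColor r (2 * j + 3) = (r + 1) / 2 + arcLen r (j + 1) / 2) ∨
    ((j + 1) % 2 = 0 ∧
      optColor r (2 * j + 2) = (r + 1) / 2 + r / 4 + arcLen r (j + 1) / 2 ∧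
      optColor r (2 * j + 3) = (r + 1) / 2 + r / 4 - arcLen r (j + 1) / 2) := by
  have d2 : (2 * j + 2) / 2 = j + 1 := by omega
  have d3 : (2 * j + 3) / 2 = j + 1 := by omega
  rcases Nat.mod_two_eq_zero_or_one (j + 1) with h | h
  · right
    refine ⟨h, ?_, ?_⟩ <;> unfold optColor
    · rw [if_neg (by omega), if_neg (by omega), if_neg (by omega), if_neg (by omega),
        if_pos (by omega), d2]
    · rw [if_neg (by omega), if_neg (by omega), if_neg (by omega), if_neg (by omega),
        if_neg (by omega), d3]
  · left
    refine ⟨h, ?_, ?_⟩ <;> unfold optColor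
    · rw [if_neg (by omega), if_neg (by omega), if_pos (by omega), d2]
    · rw [if_neg (by omega), if_neg (by omega), if_neg (by omega), if_pos (by omega), d3]

lemma arcLen_succ (r : ℝ) (i : ℕ) : arcLen r (i + 1) = arcLen r i + (r / 2 - 2) := by
  unfold arcLen
  push_cast
  ring

lemma arcLen_le {r : ℝ} (hr : r < 4) {i : ℕ} (hi : 1 ≤ i) : arcLen r i ≤ r - 3 := by
  unfold arcLen
  have : (1 : ℝ) ≤ i := by exact_mod_cast hi
  nlinarith

lemma arcLen_nonneg_of_le {r : ℝ} (hr : r < 4) {i n : ℕ} (hin : i ≤ n)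
    (hn : 0 ≤ arcLen r n) : 0 ≤ arcLen r i := by
  unfold arcLen at *
  have : (i : ℝ) ≤ n := by exact_mod_cast hin
  nlinarith

lemma optColor_mem {r : ℝ} (hr3 : 3 ≤ r) (hr : r < 4) {i : ℕ} (hi : 0 ≤ arcLen r i)
    (n : ℕ) (hn : n < 2 * i + 1) : 0 ≤ optColor r n ∧ optColor r n < r := by
  rcases Nat.lt_or_ge n 2 with h | h
  · interval_cases n
    · simp [optColor]; linarith
    · simp [optColor]; linarith
  · have hp := optColor_pair r (n / 2 - 1)
    have h0 : 0 ≤ arcLen r (n / 2 - 1 + 1) := arcLen_nonneg_of_le hr (by omega) hi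
    have h1 : arcLen r (n / 2 - 1 + 1) ≤ r - 3 := arcLen_le hr (by omega)
    rcases Nat.mod_two_eq_zero_or_one n with e | e
    · rw [show 2 * (n / 2 - 1) + 2 = n by omega] at hp
      rcases hp with ⟨m, a, -⟩ | ⟨m, a, -⟩ <;> rw [a]
      · constructor <;> linarith
      · -- the centers of these arcs belong to levels `k ≥ 2`, whose arcs are shorter
        have h2 : arcLen r (n / 2 - 1) ≤ r - 3 := arcLen_le hr (by omega)
        rw [arcLen_succ] at *
        constructor <;> linarith
    · rw [show 2 * (n / 2 - 1) + 3 = n by omega] at hp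
      rcases hp with ⟨m, -, a⟩ | ⟨m, -, a⟩ <;> rw [a] <;> constructor <;> linarith

/-- Every vertex and its copy are compatible with the two neighbors recorded for that vertex. -/
lemma optColor_last {r : ℝ} (hr3 : 3 ≤ r) (hr : r < 4) (j : ℕ)
    (hj : 0 ≤ arcLen r (j + 1)) (n : ℕ) (hn : n = 2 * j + 2 ∨ n = 2 * j + 3) :
    EdgeOK (omegaData (j + 1)).2.1.2 r
      (optColor r (omegaData (j + 1)).2.1.1) (optColor r n) ∧
    EdgeOK (omegaData (j + 1)).2.2.2 r
      (optColor r (omegaData (j + 1)).2.2.1) (optColor r n) := by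
  cases j with
  | zero =>
    have h1 : arcLen r 1 = r - 3 := by simp [arcLen]
    have e0 : optColor r 0 = 0 := by simp [optColor]
    have e1 : optColor r 1 = 1 := by simp [optColor]
    have e2 : 2 ≤ optColor r n ∧ optColor r n ≤ r - 1 := by
      rcases hn with rfl | rfl <;> simp [optColor, h1] <;> constructor <;> linarith
    change EdgeOK true r (optColor r 0) _ ∧ EdgeOK true r (optColor r 1) _
    rw [e0, e1]
    simp only [EdgeOK, if_true]
    rw [abs_of_nonpos (by linarith), abs_of_nonpos (by linarith)]
    refine ⟨⟨?_, ?_⟩, ?_, ?_⟩ <;> linarith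
  | succ k =>
    change EdgeOK true r (optColor r (2 * k + 2)) _ ∧ EdgeOK false r (optColor r (2 * k + 3)) _
    have hk : arcLen r (k + 1) ≤ r - 3 := arcLen_le hr (by omega)
    have hs := arcLen_succ r (k + 1)
    have hp := optColor_pair r k
    have hq := optColor_pair r (k + 1)
    simp only [EdgeOK, if_true, Bool.false_eq_true, if_false]
    rcases hp with ⟨m, p1, p2⟩ | ⟨m, p1, p2⟩ <;>
    rcases hq with ⟨m', q1, q2⟩ | ⟨m', q1, q2⟩ <;>
    first
    | omega
    | (rw [p1, p2]
       rcases hn with rfl | rfl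
       all_goals
         first | rw [q1] | rw [q2]
         refine ⟨⟨?_, abs_le.2 ⟨?_, ?_⟩⟩, Or.inl (abs_le.2 ⟨?_, ?_⟩)⟩
         · first
           | exact le_abs.2 (Or.inl (by linarith))
           | exact le_abs.2 (Or.inr (by linarith))
         all_goals linarith)

lemma optColor_edges {r : ℝ} (hr3 : 3 ≤ r) (hr : r < 4) (j : ℕ) (hj : 0 ≤ arcLen r (j + 1)) :
    ∀ a b s, (a, b, s) ∈ omegaList (j + 1) → EdgeOK s r (optColor r a) (optColor r b) := by
  induction j with
  | zero =>
    have hl := optColor_last hr3 hr 0 hj 2 (Or.inl rfl)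
    intro a b s h
    simp only [omegaList, omegaData, List.mem_cons, Prod.mk.injEq, List.not_mem_nil,
      or_false] at h
    rcases h with ⟨rfl, rfl, rfl⟩ | ⟨rfl, rfl, rfl⟩ | ⟨rfl, rfl, rfl⟩
    · simp [EdgeOK, optColor]
      linarith
    · exact hl.1
    · exact hl.2
  | succ k ih =>
    have hk : 0 ≤ arcLen r (k + 1) := arcLen_nonneg_of_le hr (by omega) hj
    have hc := optColor_last hr3 hr k hk (2 * k + 3) (Or.inr rfl)
    have hl := optColor_last hr3 hr (k + 1) hj (2 * k + 4) (Or.inl rfl)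
    intro a b s h
    rw [omegaList_succ] at h
    simp only [List.mem_append, List.mem_cons, Prod.mk.injEq, List.not_mem_nil,
      or_false] at h
    rcases h with h | ⟨rfl, rfl, rfl⟩ | ⟨rfl, rfl, rfl⟩ | ⟨rfl, rfl, rfl⟩ | ⟨rfl, rfl, rfl⟩
    · exact ih hk _ _ _ h
    · exact hc.1
    · exact hc.2
    · exact hl.1
    · exact hl.2

/-- For every `i ≥ 1`, the signed 2-degenerate simple graph `Ω_i` on `2i+1` vertices
satisfies `χ_c(Ω_i) = (4i+2)/(i+1) = 4 - 4/(2i+2) = 4 - 4/(|V(Ω_i)|+1)`. -/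
theorem circChrom_omega (i : ℕ) (hi : 1 ≤ i) :
    circChrom (OmegaGraph i) (omegaSign i) =
      ENNReal.ofReal ((4 * (i : ℝ) + 2) / ((i : ℝ) + 1)) ∧
    ((4 * (i : ℝ) + 2) / ((i : ℝ) + 1)) = 4 - 4 / (2 * (i : ℝ) + 2) := by
  refine ⟨le_antisymm ?_ ?_, ?_⟩
  · have hi' : (1 : ℝ) ≤ i := by exact_mod_cast hi
    have hpos : (0 : ℝ) < (i : ℝ) + 1 := by linarith
    set r : ℝ := (4 * (i : ℝ) + 2) / ((i : ℝ) + 1) with hrdef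
    have hr3 : 3 ≤ r := by
      rw [hrdef, le_div_iff₀ hpos]
      linarith
    have hr4 : r < 4 := by
      rw [hrdef, div_lt_iff₀ hpos]
      linarith
    have hmul : r * ((i : ℝ) + 1) = 4 * i + 2 := div_mul_cancel₀ _ hpos.ne'
    have h0 : 0 ≤ arcLen r i := by
      unfold arcLen
      linarith
    refine sInf_le ⟨r, ⟨by linarith, hasCircularColoring_iff_s9.2
      ⟨optColor r, optColor_mem hr3 hr4 h0, ?_⟩⟩, rfl⟩
    obtain ⟨j, rfl⟩ := Nat.exists_eq_add_of_le' hi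
    exact optColor_edges hr3 hr4 j h0
  · refine le_sInf ?_
    rintro _ ⟨r, ⟨hr2, hr⟩, rfl⟩
    exact ENNReal.ofReal_le_ofReal (le_of_hasCircularColoring hi hr2 hr)
  · have : (i : ℝ) + 1 ≠ 0 := by positivity
    have h2 : 2 * (i : ℝ) + 2 ≠ 0 := by positivity
    field_simp
    ring
end

section
/- Let (G, σ) be a signed graph and u a vertex of (G, σ). Let F_u(G, σ) be the signed graph obtained from (G, σ) by contracting all edges incident to u (identifying u and all its neighbors into a single vertex) and keeping the signs of all other edges. If χ_c(F_u(G, σ)) < 4, then χ_c(G, σ) < 4. -/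
/-!
Put an `r`-coloring `f` of `F_u(G, σ)`, `r < 4`, on a circle of circumference `r`: a positive edge
asks for endpoints at circular distance at least `1`, a negative edge asks for one endpoint to be
at circular distance at least `1` from the antipode of the other. Stretching the circle to a
circumference `r' ∈ [r, 4)` turns these bounds `1` into `r' / r`, so afterwards every vertex on one
side of an edge can be moved by `r' / r - 1`.

Pull the stretched coloring back to `G`, so that all neighbors of `u` sit at a common point `c`.
Move each neighbor by `δ = 1 - r' / 4`, backwards if its edge to `u` is positive and forwards if it
is negative, and place `u` at `c + r' / 4`. Then `u` is at distance `r' / 4 + δ = 1` from its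
positive neighbors and `r' / 4 - δ = r' / 2 - 1` from its negative ones, as required.
An edge with at most one endpoint adjacent to `u` survives as soon as `δ ≤ r' / r - 1`. An edge
joining two neighbors of `u` is a loop in the contraction, hence negative because a positive loop
is not colorable, and it survives as soon as `2 * δ ≤ r' / 2 - 1`. Both inequalities hold for
`r' = max (8 * r / (4 + r)) 3 < 4`.

Colors are handled as arbitrary reals, read modulo `r'` through the predicate `EdgeFar`.
-/


open scoped ENNReal

/-- A signed multigraph on vertex type `V` with edge type `E`: each edge has an
unordered pair of endpoints (possibly a loop) and a sign (`true` = positive). -/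
structure SignedMultigraph (V : Type*) (E : Type*) where
  ends : E → Sym2 V
  sign : E → Bool

/-- A circular `r`-coloring of a signed multigraph. -/
def MultigraphIsCircularColoring {V E : Type*} (M : SignedMultigraph V E) (r : ℝ)
    (f : V → ℝ) : Prop :=
  (∀ v, 0 ≤ f v ∧ f v < r) ∧
  ∀ (e : E) (a b : V), M.ends e = s(a, b) →
    (if M.sign e then 1 ≤ |f a - f b| ∧ |f a - f b| ≤ r - 1
     else |f a - f b| ≤ r / 2 - 1 ∨ r / 2 + 1 ≤ |f a - f b|)

/-- The circular chromatic number of a signed multigraph (`⊤` if it admits no circular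
`r`-coloring for any `r ≥ 2`). -/
noncomputable def multigraphCircChrom {V E : Type*} (M : SignedMultigraph V E) : ℝ≥0∞ :=
  sInf (ENNReal.ofReal '' {r : ℝ | 2 ≤ r ∧ ∃ f, MultigraphIsCircularColoring M r f})

/-- The setoid on `V` identifying `u` with all of its neighbors in `G` (the vertex
identification performed when contracting all edges incident to `u`). -/
def contractStarSetoid {V : Type*} (G : SimpleGraph V) (u : V) : Setoid V where
  r a b := a = b ∨ (a ∈ insert u (G.neighborSet u) ∧ b ∈ insert u (G.neighborSet u))
  iseqv := by
    refine ⟨fun x => Or.inl rfl, ?_, ?_⟩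
    · rintro x y (rfl | h)
      · exact Or.inl rfl
      · exact Or.inr ⟨h.2, h.1⟩
    · rintro x y z (rfl | h1) (rfl | h2)
      · exact Or.inl rfl
      · exact Or.inr h2
      · exact Or.inr h1
      · exact Or.inr ⟨h1.1, h2.2⟩

/-- `F_u(G, σ)`: the signed multigraph obtained from the signed graph `(G, σ)` by
contracting all edges incident to `u` (identifying `u` and all its neighbors into a
single vertex) and keeping the signs of all remaining edges. Its edges are the edges of
`G` not incident to `u`, with endpoints taken modulo the identification. -/
def contractStar {V : Type*} (G : SimpleGraph V) (σ : Sym2 V → Bool) (u : V) :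
    SignedMultigraph (Quotient (contractStarSetoid G u))
      {e : Sym2 V // e ∈ G.edgeSet ∧ u ∉ e} where
  ends e := e.val.map (Quotient.mk (contractStarSetoid G u))
  sign e := σ e.val

/-! ### Edge conditions on the circle -/

/-- The edge condition with bound `t` on the circle `ℝ / rℤ`, for an edge of sign `s` whose
endpoints have (lifted) color difference `x`: a positive edge requires `x` to be at circular
distance at least `t` from `0`, a negative edge at least `t` from `r / 2`. -/
def EdgeFar (s : Bool) (r t x : ℝ) : Prop :=
  ∀ n : ℤ, t ≤ |x - (if s then 0 else r / 2) - n * r|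

lemma EdgeFar.add_period {s : Bool} {r t x : ℝ} (h : EdgeFar s r t x) (m : ℤ) :
    EdgeFar s r t (x + m * r) := by
  intro n
  have := h (n - m)
  push_cast at this
  convert this using 2
  ring

lemma EdgeFar.neg {s : Bool} {r t x : ℝ} (h : EdgeFar s r t x) : EdgeFar s r t (-x) := by
  intro n
  cases s
  · have := h (-n - 1)
    rw [← abs_neg]
    push_cast at this
    convert this using 2
    simp only [Bool.false_eq_true, if_false]
    ring
  · have := h (-n)
    rw [← abs_neg]
    push_cast at this
    convert this using 2
    simp only [if_true]
    ring

lemma EdgeFar.scale {s : Bool} {r t x : ℝ} (h : EdgeFar s r t x) {k : ℝ} (hk : 0 ≤ k) :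
    EdgeFar s (k * r) (k * t) (k * x) := by
  intro n
  have e : k * x - (if s then 0 else k * r / 2) - n * (k * r)
      = k * (x - (if s then 0 else r / 2) - n * r) := by
    split_ifs <;> ring
  rw [e, abs_mul, abs_of_nonneg hk]
  exact mul_le_mul_of_nonneg_left (h n) hk

lemma EdgeFar.move {s : Bool} {r t t' x y : ℝ} (h : EdgeFar s r t x) (hxy : |x - y| ≤ t - t') :
    EdgeFar s r t' y := by
  intro n
  have h1 := h n
  have h2 := abs_sub_abs_le_abs_sub (x - (if s then 0 else r / 2) - n * r)
    (y - (if s then 0 else r / 2) - n * r)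
  have e : x - (if s then 0 else r / 2) - n * r - (y - (if s then 0 else r / 2) - n * r)
      = x - y := by ring
  rw [e] at h2
  linarith

/-- For differences of colors in `[0, r)`, the edge condition of a circular `r`-coloring is the
condition `EdgeFar` with bound `1`. -/
lemma edgeFar_iff {s : Bool} {r x : ℝ} (hr : 2 ≤ r) (hx : |x| < r) :
    EdgeFar s r 1 x ↔
      if s then 1 ≤ |x| ∧ |x| ≤ r - 1 else |x| ≤ r / 2 - 1 ∨ r / 2 + 1 ≤ |x| := by
  obtain ⟨hx1, hx2⟩ := abs_lt.1 hx
  have key : ∀ n : ℤ, n ≤ -2 ∨ n = -1 ∨ n = 0 ∨ n = 1 ∨ 2 ≤ n := by intro n; omega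
  cases s
  · simp only [EdgeFar, Bool.false_eq_true, if_false]
    constructor
    · intro h
      have h0 := h 0
      have h1 := h (-1)
      push_cast at h0 h1
      rw [le_abs] at h0 h1
      rcases abs_cases x with ⟨e, _⟩ | ⟨e, _⟩ <;> rw [e]
      · rcases h0 with h0 | h0
        · right; linarith
        · left; linarith
      · rcases h1 with h1 | h1
        · left; linarith
        · right; linarith
    · intro h n
      rw [le_abs]
      rcases key n with hn | rfl | rfl | rfl | hn
      · left
        have : (n : ℝ) ≤ -2 := by exact_mod_cast hn
        nlinarith
      · push_cast
        rcases abs_cases x with ⟨e, _⟩ | ⟨e, _⟩ <;> rw [e] at h <;> rcases h with h | h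
        · left; linarith
        · left; linarith
        · left; linarith
        · right; linarith
      · push_cast
        rcases abs_cases x with ⟨e, _⟩ | ⟨e, _⟩ <;> rw [e] at h <;> rcases h with h | h
        · right; linarith
        · left; linarith
        · right; linarith
        · right; linarith
      · right; push_cast; linarith
      · right
        have : (2 : ℝ) ≤ n := by exact_mod_cast hn
        nlinarith
  · simp only [EdgeFar, if_true]
    constructor
    · intro h
      have h0 := h 0
      have h1 := h (-1)
      have h2 := h 1
      push_cast at h0 h1 h2
      refine ⟨by simpa using h0, ?_⟩
      rw [le_abs] at h1 h2
      rw [abs_le]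
      constructor
      · rcases h1 with h1 | h1 <;> linarith
      · rcases h2 with h2 | h2 <;> linarith
    · rintro ⟨h, h'⟩ n
      rw [abs_le] at h'
      rcases key n with hn | rfl | rfl | rfl | hn
      · rw [le_abs]; left
        have : (n : ℝ) ≤ -2 := by exact_mod_cast hn
        nlinarith
      · rw [le_abs]; left; push_cast; linarith
      · simpa using h
      · rw [le_abs]; right; push_cast; linarith
      · rw [le_abs]; right
        have : (2 : ℝ) ≤ n := by exact_mod_cast hn
        nlinarith

lemma abs_sub_lt_of_mem {a b r : ℝ} (ha : 0 ≤ a ∧ a < r) (hb : 0 ≤ b ∧ b < r) :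
    |a - b| < r :=
  abs_lt.2 ⟨by linarith [ha.1, hb.2], by linarith [ha.2, hb.1]⟩

/-- A real-valued map satisfying all edge conditions modulo `r` reduces modulo `r` to a circular
`r`-coloring. -/
lemma hasCircularColoring_of_lift {V : Type*} (G : SimpleGraph V) (σ : Sym2 V → Bool) {r : ℝ}
    (hr : 2 ≤ r) (g : V → ℝ) (hg : ∀ v w, G.Adj v w → EdgeFar (σ s(v, w)) r 1 (g v - g w)) :
    HasCircularColoring G σ r := by
  have hr0 : 0 < r := by linarith
  have hmem : ∀ v, 0 ≤ toIcoMod hr0 0 (g v) ∧ toIcoMod hr0 0 (g v) < r := fun v => by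
    simpa using toIcoMod_mem_Ico hr0 0 (g v)
  refine ⟨fun v => toIcoMod hr0 0 (g v), hmem, fun v w hvw => ?_⟩
  rw [← edgeFar_iff hr (abs_sub_lt_of_mem (hmem v) (hmem w))]
  convert (hg v w hvw).add_period (toIcoDiv hr0 0 (g w) - toIcoDiv hr0 0 (g v)) using 1
  simp only [toIcoMod, zsmul_eq_mul]
  push_cast
  ring

/-! ### Lifting a coloring of the contraction -/

/-- A new circumference `r' < 4` large enough that moving neighbors of `u` by `1 - r' / 4` is
harmless. -/
lemma exists_circumference {r : ℝ} (hr : 2 ≤ r) (hr4 : r < 4) :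
    ∃ r', 3 ≤ r' ∧ r' < 4 ∧ 1 - r' / 4 ≤ r' / r - 1 := by
  refine ⟨max (8 * r / (4 + r)) 3, le_max_right _ _, max_lt ?_ (by norm_num), ?_⟩
  · rw [div_lt_iff₀ (by linarith)]; linarith
  · have h := le_max_left (8 * r / (4 + r)) 3
    generalize max (8 * r / (4 + r)) 3 = q at h
    rw [div_le_iff₀ (by linarith)] at h
    have : 2 - q / 4 ≤ q / r := by
      rw [le_div_iff₀ (by linarith)]; linarith
    linarith

open Classical in
/-- The lifted coloring of `G` obtained from a coloring `f` of the contraction: stretch by `k`,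
put `u` a quarter turn (of the circle of circumference `r'`) after the contracted vertex, and shift
each neighbor of `u` by `1 - r' / 4` in the direction dictated by the sign of its edge to `u`. -/
noncomputable def starLift {V : Type*} (G : SimpleGraph V) (σ : Sym2 V → Bool) (u : V)
    (k r' : ℝ) (f : Quotient (contractStarSetoid G u) → ℝ) (v : V) : ℝ :=
  k * f (Quotient.mk _ v) +
    if v = u then r' / 4
    else if G.Adj u v then (if σ s(u, v) then -(1 - r' / 4) else 1 - r' / 4) else 0

lemma contractStar_mk_eq {V : Type*} {G : SimpleGraph V} {u v w : V}
    (hv : v = u ∨ G.Adj u v) (hw : w = u ∨ G.Adj u w) :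
    Quotient.mk (contractStarSetoid G u) v = Quotient.mk (contractStarSetoid G u) w :=
  Quotient.sound (Or.inr ⟨by simpa using hv, by simpa using hw⟩)

/-- The edges at `u` are properly colored by `starLift`. -/
lemma starLift_edge_center {V : Type*} (G : SimpleGraph V) (σ : Sym2 V → Bool) {u w : V}
    (k : ℝ) {r' : ℝ} (h3 : 3 ≤ r')
    (f : Quotient (contractStarSetoid G u) → ℝ) (huw : G.Adj u w) :
    EdgeFar (σ s(u, w)) r' 1 (starLift G σ u k r' f u - starLift G σ u k r' f w) := by
  have hq : Quotient.mk (contractStarSetoid G u) u = Quotient.mk _ w :=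
    contractStar_mk_eq (Or.inl rfl) (Or.inr huw)
  rw [starLift, starLift, if_pos rfl, if_neg huw.ne', if_pos huw, hq]
  cases hs : σ s(u, w)
  · have e : k * f (Quotient.mk _ w) + r' / 4 -
        (k * f (Quotient.mk _ w) + if false = true then -(1 - r' / 4) else 1 - r' / 4)
        = r' / 2 - 1 := by
      simp only [Bool.false_eq_true, if_false]; ring
    have ha : |r' / 2 - 1| = r' / 2 - 1 := abs_of_nonneg (by linarith)
    rw [e, edgeFar_iff (by linarith) (by rw [ha]; linarith), ha]
    simp
  · have e : k * f (Quotient.mk _ w) + r' / 4 -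
        (k * f (Quotient.mk _ w) + if true = true then -(1 - r' / 4) else 1 - r' / 4)
        = 1 := by
      simp only [if_true]; ring
    rw [e, edgeFar_iff (by linarith) (by rw [abs_one]; linarith), abs_one]
    simp only [if_true]
    exact ⟨le_rfl, by linarith⟩

/-- Away from `u`, `starLift` differs from the stretched coloring by at most `1 - r' / 4`. -/
lemma abs_starLift_sub_le {V : Type*} (G : SimpleGraph V) (σ : Sym2 V → Bool) {u v : V}
    (k : ℝ) {r' : ℝ} (h4 : r' < 4) (f : Quotient (contractStarSetoid G u) → ℝ) (hv : v ≠ u) :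
    |starLift G σ u k r' f v - k * f (Quotient.mk _ v)| ≤ 1 - r' / 4 := by
  rw [starLift, if_neg hv, add_sub_cancel_left, abs_le]
  split_ifs <;> constructor <;> linarith

lemma starLift_of_not_adj {V : Type*} (G : SimpleGraph V) (σ : Sym2 V → Bool) {u v : V}
    (k r' : ℝ) (f : Quotient (contractStarSetoid G u) → ℝ) (hv : v ≠ u) (hv' : ¬ G.Adj u v) :
    starLift G σ u k r' f v = k * f (Quotient.mk _ v) := by
  rw [starLift, if_neg hv, if_neg hv', add_zero]

/-- If the contraction `F_u(G, σ)` has circular chromatic number strictly less than 4,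
then so does `(G, σ)`. -/
theorem circChrom_lt_four_of_contractStar
    {V : Type*} [Fintype V] (G : SimpleGraph V) (σ : Sym2 V → Bool) (u : V)
    (h : multigraphCircChrom (contractStar G σ u) < 4) :
    circChrom G σ < 4 := by
  obtain ⟨_, ⟨r, ⟨hr, f, hf, hfe⟩, rfl⟩, hlt⟩ := sInf_lt_iff.1 h
  have hr4 : r < 4 := by
    have := (ENNReal.ofReal_lt_iff_lt_toReal (by linarith) (by simp)).1 hlt
    simpa using this
  obtain ⟨r', h3, h4, hδ⟩ := exists_circumference hr hr4
  refine sInf_lt_iff.2 ⟨_, ⟨r', ⟨by linarith, ?_⟩, rfl⟩,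
    (ENNReal.ofReal_lt_iff_lt_toReal (by linarith) (by simp)).2 (by simpa using h4)⟩
  have hk : r' / r * r = r' := div_mul_cancel₀ _ (by linarith)
  have hk0 : 0 ≤ r' / r := div_nonneg (by linarith) (by linarith)
  generalize r' / r = k at hk hk0 hδ
  refine hasCircularColoring_of_lift G σ (by linarith) (starLift G σ u k r' f)
    fun v w hvw => ?_
  by_cases hv : v = u
  · subst hv
    exact starLift_edge_center G σ k h3 f hvw
  by_cases hw : w = u
  · subst hw
    have := (starLift_edge_center G σ k h3 f hvw.symm).neg
    rwa [neg_sub, Sym2.eq_swap] at this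
  have hedge : u ∉ s(v, w) := by
    rw [Sym2.mem_iff]
    rintro (h | h)
    exacts [hv h.symm, hw h.symm]
  have hc := hfe ⟨s(v, w), hvw, hedge⟩ (Quotient.mk _ v) (Quotient.mk _ w) rfl
  change (if σ s(v, w) then _ else _) at hc
  have hmv := abs_starLift_sub_le G σ k h4 f hv
  have hmw := abs_starLift_sub_le G σ k h4 f hw
  rw [abs_le] at hmv hmw
  by_cases hadj : G.Adj u v ∧ G.Adj u w
  -- An edge between two neighbors of `u` becomes a loop, so it is negative.
  · have hq : Quotient.mk (contractStarSetoid G u) v = Quotient.mk _ w :=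
      contractStar_mk_eq (Or.inr hadj.1) (Or.inr hadj.2)
    rw [hq] at hc hmv
    have hb : |starLift G σ u k r' f v - starLift G σ u k r' f w| ≤ r' / 2 - 1 := by
      rw [abs_le]
      constructor <;> linarith
    rw [edgeFar_iff (by linarith) (by linarith)]
    cases hs : σ s(v, w)
    · simpa using Or.inl hb
    · rw [hs, sub_self, abs_zero, if_pos rfl] at hc
      linarith [hc.1]
  · rw [← edgeFar_iff hr (abs_sub_lt_of_mem (hf _) (hf _))] at hc
    have hsc := hc.scale hk0
    rw [hk, mul_one] at hsc
    refine hsc.move ?_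
    rw [abs_le]
    by_cases hav : G.Adj u v
    · have e := starLift_of_not_adj G σ k r' f hw fun haw => hadj ⟨hav, haw⟩
      rw [e]
      constructor <;> linarith
    · have e := starLift_of_not_adj G σ k r' f hv hav
      rw [e]
      constructor <;> linarith
end
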